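/- Let τ be a decorated permutation of {1,…,n} with exactly k decorations and schedule numbers (s_1,…,s_n). Then, in ℤ[q,t], ∑_{P ∈ stLD(n)^{•k}, dw(P) = τ} q^{dinv(P)} t^{area(P)} = t^{revmaj(τ)} ∏_{i=1}^{n} [s_i]_q, where the sum is over all valley-decorated standardly labelled Dyck paths of size n with k decorations whose diagonal word is τ. -/

import Mathlib

/-!
A path with diagonal word `τ = (σ, D)` amounts to an order in which the `n` letters of `τ` are read
along the path, since its diagonals must be the decreasing runs of `σ` (`DwEq.aw_eq`,
`filter_stLD`).  In particular its area is always `revmaj τ` (`area_toPath`).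

Give the letter `σ_j` of the run `r_a` the key `a (n + 1) - σ_j`, and give `σ_0 = 0` the key `0`.
Keys increase along the diagonal word.  In terms of keys, a reading order starting from `σ_0` is
a valid path exactly when each step raises the key by less than `n + 1` and each step onto a
decorated letter lowers it (`isValidPath_toPath`); a letter `y` is in diagonal inversion with a
later letter `x` exactly when `y` is undecorated and `0 < key y - key x < n + 1`
(`card_dinvPairs_toPath`).

Reading orders are generated by inserting letters one at a time, first the undecorated ones and
then the decorated ones, each group by increasing keys.  An undecorated letter may stand directly
after each earlier letter, `σ_0` included, of key greater than its own minus `n + 1`.  There are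
`s_i` such letters, and counting those which remain on the right yields the factor `[s_i]_q`
(`sum_insert_undec`).  A decorated letter has one allowed place for each undecorated letter whose
key exceeds its own by less than `n + 1`.  Again there are `s_i` of them, but now the inversions
created are `1, …, s_i` in number, which yields `q [s_i]_q` (`sum_insert_dec`).  The surplus factor
`q ^ |D|` is what `dinv` subtracts; the subtraction of natural numbers in `dinv` is exact, as each
decorated letter is the right end of a diagonal inversion (`card_le_dinvPairs`).
-/

open Finset

namespace QEuler

/-! ### Entries of a permutation of `{1,…,n}`, with the convention `σ₀ = 0`.
A permutation `σ ∈ S_n` is represented by `Equiv.Perm (Fin n)`; its entry at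
position `i ∈ {1,…,n}` is `(σ (i-1)).val + 1 ∈ {1,…,n}`, and all other
positions (in particular position `0`) carry the value `0`. -/

def ent {n : ℕ} (σ : Equiv.Perm (Fin n)) (i : ℕ) : ℕ :=
  if h : 1 ≤ i ∧ i ≤ n then ((σ ⟨i - 1, by omega⟩ : Fin n) : ℕ) + 1 else 0

/-- Decorations: a set `D : Finset (Fin n)` records the decorated positions,
`j : Fin n` encoding position `j+1 ∈ {1,…,n}`.  `isDec D i` tells whether
position `i` is decorated (position `0` never is). -/
def isDec {n : ℕ} (D : Finset (Fin n)) (i : ℕ) : Bool :=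
  if h : 1 ≤ i ∧ i ≤ n then decide ((⟨i - 1, by omega⟩ : Fin n) ∈ D) else false

/-- Number of decorated positions among `{1,…,n}` for a decoration predicate. -/
def decCount (n : ℕ) (D : ℕ → Bool) : ℕ :=
  ((Finset.Icc 1 n).filter fun i => D i = true).card

/-! ### Major index and reverse major index -/

/-- Major index of the word `E 1, E 2, …, E n`. -/
def maj (n : ℕ) (E : ℕ → ℕ) : ℕ :=
  ∑ i ∈ Finset.Icc 1 (n - 1), if E (i + 1) < E i then i else 0

/-- Reverse major index: the major index of the reversed word `E n, …, E 1`. -/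
def revmaj (n : ℕ) (E : ℕ → ℕ) : ℕ := maj n fun i => E (n + 1 - i)

/-! ### Decreasing runs and schedule numbers -/

/-- The word is strictly decreasing along consecutive positions `p,…,q`. -/
def decOn (E : ℕ → ℕ) (p q : ℕ) : Prop := ∀ t ∈ Finset.Ico p q, E (t + 1) < E t

instance (E : ℕ → ℕ) (p q : ℕ) : Decidable (decOn E p q) := by
  unfold decOn; infer_instance

/-- Start of the maximal strictly decreasing consecutive run containing position `i`. -/
def runStart (E : ℕ → ℕ) (i : ℕ) : ℕ :=
  Nat.find (show ∃ p, decOn E p i from ⟨i, fun t ht => absurd ht (by simp)⟩)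

/-- End of the maximal strictly decreasing consecutive run containing position `i`
(positions are `0,…,n`). -/
def runEnd (n : ℕ) (E : ℕ → ℕ) (i : ℕ) : ℕ :=
  Nat.findGreatest (fun q => decOn E i q) n

/-- The schedule number of a decorated permutation (given by its entry word `E` on
positions `0,…,n`, with `E 0 = 0`, and decoration predicate `D`) at position `i`.
If `σ_i` is undecorated and lies in run `r_j` it counts the undecorated entries of `r_j`
larger than `σ_i` plus the undecorated entries of `r_{j-1}` smaller than `σ_i`;
if `σ_i` is decorated it counts the undecorated entries of `r_j` smaller than `σ_i`
plus the undecorated entries of `r_{j+1}` larger than `σ_i`. -/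
def schedNum (n : ℕ) (E : ℕ → ℕ) (D : ℕ → Bool) (i : ℕ) : ℕ :=
  if D i = true then
    ((Finset.Icc (runStart E i) (runEnd n E i)).filter fun t => D t = false ∧ E t < E i).card
      + (if runEnd n E i < n then
          ((Finset.Icc (runEnd n E i + 1) (runEnd n E (runEnd n E i + 1))).filter
            fun t => D t = false ∧ E i < E t).card
        else 0)
  else
    ((Finset.Icc (runStart E i) (runEnd n E i)).filter fun t => D t = false ∧ E i < E t).card
      + (if runStart E i = 0 then 0 else
          ((Finset.Icc (runStart E (runStart E i - 1)) (runStart E i - 1)).filter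
            fun t => D t = false ∧ E t < E i).card)

/-! ### Cyclic runs -/

/-- `σ_i,…,σ_j` is a cyclic (decreasing) run: for some shift `k`, the residues
`σ_t + k (mod n+1)` are strictly decreasing for `t = i,…,j`. -/
def IsCyclicRun (n : ℕ) (E : ℕ → ℕ) (i j : ℕ) : Prop :=
  i ≤ j ∧ j ≤ n ∧ ∃ k : ℕ, ∀ t ∈ Finset.Ico i j, (E (t + 1) + k) % (n + 1) < (E t + k) % (n + 1)

/-- A cyclic run which cannot be extended to the left. -/
def LeftMaximalRun (n : ℕ) (E : ℕ → ℕ) (i j : ℕ) : Prop :=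
  IsCyclicRun n E i j ∧ (i = 0 ∨ ¬ IsCyclicRun n E (i - 1) j)

/-- A cyclic run which cannot be extended to the right. -/
def RightMaximalRun (n : ℕ) (E : ℕ → ℕ) (i j : ℕ) : Prop :=
  IsCyclicRun n E i j ∧ (j = n ∨ ¬ IsCyclicRun n E i (j + 1))

/-! ### Double ascents, descents, peaks, valleys; `inv3` and `monot` -/

def DblAsc (E : ℕ → ℕ) (j : ℕ) : Prop := E (j - 2) < E (j - 1) ∧ E (j - 1) < E j
def DblDesc (E : ℕ → ℕ) (j : ℕ) : Prop := E (j - 1) < E (j - 2) ∧ E j < E (j - 1)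
def IsPeak (E : ℕ → ℕ) (j : ℕ) : Prop := E (j - 2) < E (j - 1) ∧ E j < E (j - 1)
def IsValley (E : ℕ → ℕ) (j : ℕ) : Prop := E (j - 1) < E (j - 2) ∧ E (j - 1) < E j

instance (E : ℕ → ℕ) (j : ℕ) : Decidable (DblAsc E j) := by unfold DblAsc; infer_instance
instance (E : ℕ → ℕ) (j : ℕ) : Decidable (DblDesc E j) := by unfold DblDesc; infer_instance
instance (E : ℕ → ℕ) (j : ℕ) : Decidable (IsPeak E j) := by unfold IsPeak; infer_instance
instance (E : ℕ → ℕ) (j : ℕ) : Decidable (IsValley E j) := by unfold IsValley; infer_instance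

/-- `(i,j)` is a 3-inversion. -/
def Inv3Pair (E : ℕ → ℕ) (i j : ℕ) : Prop :=
  (DblAsc E j ∧ E (j - 1) < E i ∧ E i < E j) ∨
  (DblDesc E j ∧ E j < E i ∧ E i < E (j - 1)) ∨
  (IsPeak E j ∧ E j < E i) ∨
  (IsValley E j ∧ E i < E j)

instance (E : ℕ → ℕ) (i j : ℕ) : Decidable (Inv3Pair E i j) := by
  unfold Inv3Pair; infer_instance

/-- Number of 3-inversions of the word `E 1, …, E n` (with the convention `E 0 = 0`). -/
def inv3 (n : ℕ) (E : ℕ → ℕ) : ℕ :=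
  ((Finset.Icc 1 n ×ˢ Finset.Icc 1 n).filter fun p => p.1 < p.2 ∧ Inv3Pair E p.1 p.2).card

/-- Number of double ascents and double descents. -/
def monot (n : ℕ) (E : ℕ → ℕ) : ℕ :=
  ((Finset.Icc 2 n).filter fun j => DblAsc E j ∨ DblDesc E j).card

/-! ### Alternating permutations, `31-2` patterns and Chebikin's statistic -/

/-- `σ₁ > σ₂ < σ₃ > ⋯`. -/
def IsAlternating (n : ℕ) (E : ℕ → ℕ) : Prop :=
  ∀ i ∈ Finset.Icc 1 (n - 1), if Odd i then E (i + 1) < E i else E i < E (i + 1)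

instance (n : ℕ) (E : ℕ → ℕ) : Decidable (IsAlternating n E) := by
  unfold IsAlternating; infer_instance

/-- The finset of alternating permutations of `{1,…,n}`. -/
def altPerms (n : ℕ) : Finset (Equiv.Perm (Fin n)) :=
  Finset.univ.filter fun σ => IsAlternating n (ent σ)

/-- Number of `31-2` patterns: pairs `(i,j)` with `i+1 < j ≤ n` and `σ_j > σ_i > σ_{i+1}`. -/
def pat312 (n : ℕ) (E : ℕ → ℕ) : ℕ :=
  ((Finset.Icc 1 n ×ˢ Finset.Icc 1 n).filter fun p =>
    p.1 + 1 < p.2 ∧ E (p.1 + 1) < E p.1 ∧ E p.1 < E p.2).card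

/-- Chebikin's alternating inversion statistic `î`. -/
def chebi (n : ℕ) (E : ℕ → ℕ) : ℕ :=
  ∑ i ∈ Finset.Icc 1 (n - 1),
    ((Finset.Icc (i + 1) n).filter fun j => if Odd i then E j < E i else E i < E j).card

/-! ### Insertion `η_l`, structural attribute `ã`, the shift `k + τ` and `δ_k` -/

/-- The entry word of the insertion `η_l(σ) ∈ S_{n+1}` of the value `l` at the end of `σ ∈ S_n`. -/
def etaEnt (n l : ℕ) (E : ℕ → ℕ) (i : ℕ) : ℕ :=
  if i = n + 1 then l
  else if 1 ≤ i ∧ i ≤ n then (if l ≤ E i then E i + 1 else E i) else 0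

/-- Structural attribute `ã(σ)` of `σ ∈ S_n`. -/
def atil (n : ℕ) (E : ℕ → ℕ) : ℕ :=
  if E (n - 1) < E n then n + 1 - E n else E n

/-- The entry word of `k + τ ∈ S_{n+1}` for `τ ∈ S_n`:
`σ₀ = 0` and `σ_{i+1}` is the representative of `k + τ_i (mod n+1)` in `{1,…,n+1}`. -/
def shiftEnt (n k : ℕ) (E : ℕ → ℕ) (i : ℕ) : ℕ :=
  if i = 0 then 0
  else if (k + E (i - 1)) % (n + 1) = 0 then n + 1 else (k + E (i - 1)) % (n + 1)

/-- Position of the first (leftmost, among `1,…,n`) undecorated letter;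
equals `n+1` if every position is decorated. -/
def firstUndecPos (n : ℕ) (D : ℕ → Bool) : ℕ :=
  Nat.find (show ∃ i, n < i ∨ (1 ≤ i ∧ D i = false) from ⟨n + 1, Or.inl (by omega)⟩)

/-- `a(τ)`: the value of the first undecorated letter of `τ`. -/
def aVal (n : ℕ) (E : ℕ → ℕ) (D : ℕ → Bool) : ℕ := E (firstUndecPos n D)

/-- Decorations of the `k`-th descendant `δ_k(τ)`: position `1` is decorated iff
`k > n+1-a(τ)`, and for `i ≥ 2` position `i` is decorated iff position `i-1` of `τ` is. -/
def deltaDec (n k : ℕ) (D : ℕ → Bool) (aval : ℕ) (i : ℕ) : Bool :=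
  if i = 0 then false
  else if i = 1 then decide (n + 1 - aval < k)
  else D (i - 1)

/-! ### Valley-decorated standardly labelled Dyck paths

A path of size `n` is encoded by its area word `a : Fin n → Fin n`
(`a i` = number of whole squares between the `(i+1)`-st north step and the diagonal;
a word `a₁ ⋯ a_n` is the area word of a Dyck path iff `a₁ = 0` and `a_i ≤ a_{i-1} + 1`),
its labelling `w : Equiv.Perm (Fin n)`, and its decoration set `dv : Finset (Fin n)`
(`j` encoding the position `j+1`). -/

abbrev PathData (n : ℕ) := (Fin n → Fin n) × Equiv.Perm (Fin n) × Finset (Fin n)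

/-- The area word, on positions `1,…,n`. -/
def aw {n : ℕ} (P : PathData n) (i : ℕ) : ℕ :=
  if h : 1 ≤ i ∧ i ≤ n then ((P.1 ⟨i - 1, by omega⟩ : Fin n) : ℕ) else 0

/-- The labels, on positions `1,…,n`. -/
def lbl {n : ℕ} (P : PathData n) (i : ℕ) : ℕ := ent P.2.1 i

/-- Whether the `i`-th north step is decorated. -/
def pdec {n : ℕ} (P : PathData n) (i : ℕ) : Bool := isDec P.2.2 i

/-- The `i`-th north step is a contractible valley: `a_{i-1} > a_i`, or
`a_{i-1} = a_i` and `w_{i-1} < w_i`. -/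
def ContractibleValley {n : ℕ} (P : PathData n) (i : ℕ) : Prop :=
  2 ≤ i ∧ i ≤ n ∧ (aw P i < aw P (i - 1) ∨ (aw P (i - 1) = aw P i ∧ lbl P (i - 1) < lbl P i))

instance {n : ℕ} (P : PathData n) (i : ℕ) : Decidable (ContractibleValley P i) := by
  unfold ContractibleValley; infer_instance

/-- `P` encodes a genuine valley-decorated standardly labelled Dyck path:
the area word is valid, labels in a common column increase from bottom to top
(equivalently, consecutive north steps carry increasing labels), and every
decoration sits on a contractible valley. -/
def IsValidPath {n : ℕ} (P : PathData n) : Prop :=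
  (1 ≤ n → aw P 1 = 0) ∧
  (∀ i ∈ Finset.Icc 2 n, aw P i ≤ aw P (i - 1) + 1) ∧
  (∀ i ∈ Finset.Icc 2 n, aw P i = aw P (i - 1) + 1 → lbl P (i - 1) < lbl P i) ∧
  (∀ i ∈ Finset.Icc 1 n, pdec P i = true → ContractibleValley P i)

instance {n : ℕ} (P : PathData n) : Decidable (IsValidPath P) := by
  unfold IsValidPath; infer_instance

/-- The finset `stLD(n)^{•k}` of valley-decorated standardly labelled Dyck paths
of size `n` with exactly `k` decorated (contractible) valleys. -/
def stLD (n k : ℕ) : Finset (PathData n) :=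
  Finset.univ.filter fun P => IsValidPath P ∧ P.2.2.card = k

/-- The area statistic. -/
def area {n : ℕ} (P : PathData n) : ℕ := ∑ i ∈ Finset.Icc 1 n, aw P i

/-- `(i,j)` is a primary diagonal inversion. -/
def PrimaryDinv {n : ℕ} (P : PathData n) (i j : ℕ) : Prop :=
  aw P i = aw P j ∧ lbl P i < lbl P j ∧ pdec P i = false

/-- `(i,j)` is a secondary diagonal inversion. -/
def SecondaryDinv {n : ℕ} (P : PathData n) (i j : ℕ) : Prop :=
  aw P i = aw P j + 1 ∧ lbl P j < lbl P i ∧ pdec P i = false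

instance {n : ℕ} (P : PathData n) (i j : ℕ) : Decidable (PrimaryDinv P i j) := by
  unfold PrimaryDinv; infer_instance
instance {n : ℕ} (P : PathData n) (i j : ℕ) : Decidable (SecondaryDinv P i j) := by
  unfold SecondaryDinv; infer_instance

/-- The set of diagonal-inversion pairs `(i,j)`, `1 ≤ i < j ≤ n`. -/
def dinvPairs {n : ℕ} (P : PathData n) : Finset (ℕ × ℕ) :=
  (Finset.Icc 1 n ×ˢ Finset.Icc 1 n).filter fun p =>
    p.1 < p.2 ∧ (PrimaryDinv P p.1 p.2 ∨ SecondaryDinv P p.1 p.2)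

/-- `dinv(P)`: number of primary and secondary diagonal inversions minus the
number of decorated valleys (a nonnegative quantity). -/
def dinv {n : ℕ} (P : PathData n) : ℕ := (dinvPairs P).card - P.2.2.card

/-! ### The diagonal word of a path -/

/-- Position in the diagonal word of the label of the `i`-th north step:
labels are listed diagonal by diagonal, and within a diagonal in decreasing order. -/
def dwPos {n : ℕ} (P : PathData n) (i : ℕ) : ℕ :=
  ((Finset.Icc 1 n).filter fun i' =>
    aw P i' < aw P i ∨ (aw P i' = aw P i ∧ lbl P i ≤ lbl P i')).card

/-- The `j`-th letter of the diagonal word `dw(P)`. -/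
def dwEnt {n : ℕ} (P : PathData n) (j : ℕ) : ℕ :=
  ∑ i ∈ (Finset.Icc 1 n).filter (fun i => dwPos P i = j), lbl P i

/-- Whether the `j`-th letter of the diagonal word is decorated. -/
def dwDec {n : ℕ} (P : PathData n) (j : ℕ) : Bool :=
  decide (((Finset.Icc 1 n).filter fun i => dwPos P i = j ∧ pdec P i = true).Nonempty)

end QEuler

namespace QEuler

/-- All schedule numbers of the decorated permutation equal `1`. -/
def HasSchedOne (n : ℕ) (E : ℕ → ℕ) (D : ℕ → Bool) : Prop :=
  ∀ i ∈ Finset.Icc 1 n, schedNum n E D i = 1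

instance (n : ℕ) (E : ℕ → ℕ) (D : ℕ → Bool) : Decidable (HasSchedOne n E D) := by
  unfold HasSchedOne; infer_instance

/-- The diagonal word of `P` is the decorated permutation `(σ, D)`. -/
def DwEq {n : ℕ} (P : PathData n) (σ : Equiv.Perm (Fin n)) (D : Finset (Fin n)) : Prop :=
  (∀ j ∈ Finset.Icc 1 n, dwEnt P j = ent σ j) ∧ ∀ j ∈ Finset.Icc 1 n, dwDec P j = isDec D j

instance {n : ℕ} (P : PathData n) (σ : Equiv.Perm (Fin n)) (D : Finset (Fin n)) :
    Decidable (DwEq P σ D) := by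
  unfold DwEq; infer_instance

end QEuler

/-! ### Inserting a letter into a word -/

namespace QEuler

section Insertion

variable {R : Type*} [CommRing R]

/-- The letter `y` may directly follow the letter `p`, in terms of keys: a step raises the key by
less than `N`, and a step onto a decorated letter lowers it. -/
def okStep (N : ℤ) (κ : ℕ → ℤ) (dec : ℕ → Bool) (p y : ℕ) : Prop :=
  κ y < κ p + N ∧ (dec y = true → κ y < κ p)

instance (N : ℤ) (κ : ℕ → ℤ) (dec : ℕ → Bool) (p y : ℕ) : Decidable (okStep N κ dec p y) := by
  unfold okStep; infer_instance

/-- A letter `y` standing to the left of `x` forms a diagonal inversion with it. -/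
def invPair (N : ℤ) (κ : ℕ → ℤ) (dec : ℕ → Bool) (y x : ℕ) : Prop :=
  κ x < κ y ∧ κ y < κ x + N ∧ dec y = false

instance (N : ℤ) (κ : ℕ → ℤ) (dec : ℕ → Bool) (y x : ℕ) : Decidable (invPair N κ dec y x) := by
  unfold invPair; infer_instance

/-- The weight `q ^ #inversions` of a word read after the letter `p`, or `0` if some step of
the word (the step from `p` to its first letter included) is not allowed. -/
def wt (q : R) (N : ℤ) (κ : ℕ → ℤ) (dec : ℕ → Bool) : ℕ → List ℕ → R
  | _, [] => 1
  | p, y :: L => if okStep N κ dec p y then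
      q ^ (L.countP fun x => decide (invPair N κ dec y x)) * wt q N κ dec y L else 0

/-- The `q`-integer `[m]_q`. -/
def qInt (q : R) (m : ℕ) : R := ∑ e ∈ Finset.range m, q ^ e

lemma qInt_succ_top (q : R) (m : ℕ) : qInt q (m + 1) = qInt q m + q ^ m := by
  simp [qInt, Finset.sum_range_succ]

lemma qInt_succ_bot (q : R) (m : ℕ) : qInt q (m + 1) = 1 + q * qInt q m := by
  simp only [qInt, Finset.sum_range_succ', Finset.mul_sum, pow_zero, pow_succ']
  ring

variable (q : R) (N : ℤ) (κ : ℕ → ℤ) (dec : ℕ → Bool)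

lemma sum_insert_cons (p z y : ℕ) (L : List ℕ) :
    ((List.permutations'Aux z (y :: L)).map (wt q N κ dec p)).sum
      = wt q N κ dec p (z :: y :: L) +
        (if okStep N κ dec p y then
          q ^ (L.countP fun x => decide (invPair N κ dec y x)) *
            (if invPair N κ dec y z then q else 1) *
            ((List.permutations'Aux z L).map (wt q N κ dec y)).sum else 0) := by
  rw [List.permutations'Aux, List.map_cons, List.sum_cons, List.map_map]
  congr 1
  split_ifs with h h2
  all_goals try rw [← List.sum_map_mul_left]
  · congr 1
    apply List.map_congr_left
    intro l hl
    have hp : l.Perm (z :: L) := by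
      have := List.mem_permutations'.1
        (show l ∈ List.permutations' (z :: L) from
          List.mem_flatMap.2 ⟨L, List.mem_permutations'.2 (List.Perm.refl _), hl⟩)
      exact this
    simp only [Function.comp, wt, if_pos h, hp.countP_eq, List.countP_cons, h2, decide_true,
      if_true, pow_succ]
  · congr 1
    apply List.map_congr_left
    intro l hl
    have hp : l.Perm (z :: L) := by
      have := List.mem_permutations'.1
        (show l ∈ List.permutations' (z :: L) from
          List.mem_flatMap.2 ⟨L, List.mem_permutations'.2 (List.Perm.refl _), hl⟩)
      exact this
    simp [Function.comp, wt, if_pos h, hp.countP_eq, h2]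
  · rw [List.sum_eq_zero]
    intro x hx
    obtain ⟨l, _, rfl⟩ := List.mem_map.1 hx
    simp [wt, h]

/-- Inserting an undecorated letter `c` of maximal key into a word of undecorated letters: it can
stand directly after any letter of key greater than `κ c - N`, and it is then inverted with
exactly those of these letters which remain on its right. -/
lemma sum_insert_undec (c : ℕ) (hc : dec c = false) (L : List ℕ) :
    ∀ p, κ p < κ c → (∀ y ∈ L, κ y < κ c ∧ dec y = false) →
    ((List.permutations'Aux c L).map (wt q N κ dec p)).sum = wt q N κ dec p L *
      ((if κ c < κ p + N then q ^ (L.countP fun y => decide (κ c < κ y + N)) else 0)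
        + qInt q (L.countP fun y => decide (κ c < κ y + N))) := by
  induction L with
  | nil =>
    intro p hp _
    simp [List.permutations'Aux, wt, okStep, hc, qInt]
  | cons y L ih =>
    intro p hp hL
    obtain ⟨hy, hyd⟩ := hL y (by simp)
    have ih' := ih y hy (fun x hx => hL x (by simp [hx]))
    have hcount : ∀ x ∈ y :: L, decide (invPair N κ dec c x) = decide (κ c < κ x + N) := by
      intro x hx
      have := (hL x hx).1
      simp [invPair, this, hc]
    have hinv : ¬ invPair N κ dec y c := by
      simp only [invPair, not_and]; intro h; omega
    have hcy : okStep N κ dec c y ∨ κ c + N ≤ κ y := by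
      by_cases h : κ y < κ c + N
      · left; exact ⟨h, by simp [hyd]⟩
      · right; omega
    rw [sum_insert_cons, ih', if_neg hinv]
    have e1 : wt q N κ dec p (c :: y :: L) = if κ c < κ p + N then
        q ^ ((y :: L).countP fun x => decide (κ c < κ x + N)) * wt q N κ dec p (y :: L) else 0 := by
      have hok : okStep N κ dec p c ↔ κ c < κ p + N := by simp [okStep, hc]
      rw [wt]
      simp only [hok]
      split_ifs with h
      · congr 1
        · congr 1
          exact List.countP_congr (fun x hx => by rw [hcount x hx])
        · have h1 : okStep N κ dec c y := ⟨by omega, by simp [hyd]⟩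
          have h2 : okStep N κ dec p y := ⟨by omega, by simp [hyd]⟩
          simp only [wt, if_pos h1, if_pos h2]
      · rfl
    rw [e1]
    by_cases hpy : okStep N κ dec p y
    · simp only [wt, if_pos hpy, List.countP_cons]
      by_cases h1 : κ c < κ y + N <;> by_cases h2 : κ c < κ p + N <;>
        simp [h1, h2, qInt_succ_top] <;> ring
    · simp [wt, hpy]

/-- Inserting a decorated letter `z` into a word whose decorated letters have smaller keys: for
each undecorated letter with key strictly between `κ z` and `κ z + N` there is exactly one allowed
place, just before the first later letter of key less than `κ z + N`.  A word which
follows a letter `p` of key greater than `κ z` has one additional place. -/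
lemma sum_insert_dec (hN : 0 < N) (z : ℕ) (hz : dec z = true) (L : List ℕ) :
    ∀ p, (∀ y ∈ L, κ y ≠ κ z ∧ (dec y = true → κ y < κ z)) →
    ((List.permutations'Aux z L).map (wt q N κ dec p)).sum = wt q N κ dec p L *
      ((if κ z < κ p then 1 else 0)
        + q * qInt q (L.countP fun y => decide (invPair N κ dec y z))) := by
  have hzp : ∀ p, okStep N κ dec p z ↔ κ z < κ p := by
    intro p; simp only [okStep, hz, forall_const]; omega
  induction L with
  | nil =>
    intro p _
    simp [List.permutations'Aux, wt, hzp, qInt]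
  | cons y L ih =>
    intro p hL
    obtain ⟨hyz, hyd⟩ := hL y (by simp)
    have ih' := ih y (fun x hx => hL x (by simp [hx]))
    rw [sum_insert_cons, ih']
    have hcz' : ((y :: L).countP fun x => decide (invPair N κ dec z x)) = 0 := by
      simp [invPair, hz]
    have e1 : wt q N κ dec p (z :: y :: L) =
        if κ z < κ p ∧ κ y < κ z + N then wt q N κ dec p (y :: L) else 0 := by
      rw [wt, hcz']
      by_cases h : κ z < κ p ∧ κ y < κ z + N
      · have h0 : okStep N κ dec p z := (hzp p).2 h.1
        have h1 : okStep N κ dec z y := ⟨by omega, hyd⟩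
        have h2 : okStep N κ dec p y := ⟨by omega, fun hh => by have := hyd hh; omega⟩
        simp [wt, h0, h1, h2, h]
      · rw [if_neg h]
        by_cases h0 : okStep N κ dec p z
        · have h1 : ¬ okStep N κ dec z y := fun h1 => h ⟨(hzp p).1 h0, h1.1⟩
          simp [wt, h1]
        · simp [h0]
    rw [e1]
    by_cases hpy : okStep N κ dec p y
    · simp only [wt, if_pos hpy, List.countP_cons]
      have hpy1 := hpy.1
      rcases lt_or_gt_of_ne hyz with hlt | hgt
      · -- `y` lies below `z`: the place before `y` is available exactly when `κ z < κ p`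
        have h1 : ¬ invPair N κ dec y z := fun h => by have := h.1; omega
        have h3 : ¬ κ z < κ y := by omega
        have h4 : κ y < κ z + N := by omega
        by_cases h2 : κ z < κ p <;> simp [h1, h2, h3, h4] <;> ring
      · have hd : dec y = false := by
          by_contra h
          have := hyd (by simpa using h)
          omega
        by_cases h4 : κ y < κ z + N
        · -- `y` opens a new place somewhere to its right
          have h1 : invPair N κ dec y z := ⟨hgt, h4, hd⟩
          by_cases h2 : κ z < κ p <;> simp [h1, h2, hgt, h4, qInt_succ_bot] <;> ring
        · -- the place before `y` is not available, and is replaced by one further right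
          have h1 : ¬ invPair N κ dec y z := fun h => h4 h.2.1
          have h2 : κ z < κ p := by omega
          simp [h1, h2, hgt, h4]; ring
    · simp [wt, hpy]

end Insertion

end QEuler

/-! ### Weighted sum over all arrangements of the letters -/

namespace QEuler

section Arrangements

variable {R : Type*} [CommRing R] (q : R) (N : ℤ) (κ : ℕ → ℤ) (dec : ℕ → Bool)

/-- The undecorated letters among `m, …, 1`, in this order. -/
def undecList : ℕ → List ℕ
  | 0 => []
  | m + 1 => if dec (m + 1) then undecList m else (m + 1) :: undecList m

/-- The decorated letters among `m, …, 1`, followed by the list `U`. -/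
def decList (U : List ℕ) : ℕ → List ℕ
  | 0 => U
  | m + 1 => if dec (m + 1) then (m + 1) :: decList U m else decList U m

lemma mem_undecList (m y : ℕ) : y ∈ undecList dec m ↔ 1 ≤ y ∧ y ≤ m ∧ dec y = false := by
  induction m with
  | zero => simp only [undecList, List.not_mem_nil, false_iff]; omega
  | succ m ih =>
    rw [undecList]
    split_ifs with h
    · rw [ih]
      constructor
      · rintro ⟨a, b, c⟩; exact ⟨a, by omega, c⟩
      · rintro ⟨a, b, c⟩
        refine ⟨a, ?_, c⟩
        by_contra hy
        obtain rfl : y = m + 1 := by omega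
        simp [h] at c
    · rw [List.mem_cons, ih]
      constructor
      · rintro (rfl | ⟨a, b, c⟩)
        · exact ⟨by omega, le_refl _, by simpa using h⟩
        · exact ⟨a, by omega, c⟩
      · rintro ⟨a, b, c⟩
        by_cases hy : y = m + 1
        · exact Or.inl hy
        · exact Or.inr ⟨a, by omega, c⟩

lemma mem_decList (U : List ℕ) (m y : ℕ) :
    y ∈ decList dec U m ↔ y ∈ U ∨ (1 ≤ y ∧ y ≤ m ∧ dec y = true) := by
  induction m with
  | zero => simp only [decList, iff_self_or]; omega
  | succ m ih =>
    rw [decList]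
    split_ifs with h
    · rw [List.mem_cons, ih]
      constructor
      · rintro (rfl | a | ⟨a, b, c⟩)
        · exact Or.inr ⟨by omega, le_refl _, h⟩
        · exact Or.inl a
        · exact Or.inr ⟨a, by omega, c⟩
      · rintro (a | ⟨a, b, c⟩)
        · exact Or.inr (Or.inl a)
        · by_cases hy : y = m + 1
          · exact Or.inl hy
          · exact Or.inr (Or.inr ⟨a, by omega, c⟩)
    · rw [ih]
      constructor
      · rintro (a | ⟨a, b, c⟩)
        · exact Or.inl a
        · exact Or.inr ⟨a, by omega, c⟩
      · rintro (a | ⟨a, b, c⟩)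
        · exact Or.inl a
        · refine Or.inr ⟨a, ?_, c⟩
          by_contra hy
          obtain rfl : y = m + 1 := by omega
          exact h c

lemma nodup_undecList (m : ℕ) : (undecList dec m).Nodup := by
  induction m with
  | zero => simp [undecList]
  | succ m ih =>
    rw [undecList]
    split_ifs
    · exact ih
    · refine List.nodup_cons.2 ⟨?_, ih⟩
      rw [mem_undecList]; omega

lemma nodup_decList (n m : ℕ) : (decList dec (undecList dec n) m).Nodup := by
  induction m with
  | zero => exact nodup_undecList dec n
  | succ m ih =>
    rw [decList]
    split_ifs with h
    · refine List.nodup_cons.2 ⟨?_, ih⟩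
      rw [mem_decList, mem_undecList]
      simp [h]
    · exact ih

lemma decList_perm (n : ℕ) : (decList dec (undecList dec n) n).Perm (List.range' 1 n) := by
  rw [List.perm_ext_iff_of_nodup (nodup_decList dec n n) List.nodup_range']
  intro y
  rw [mem_decList, mem_undecList, List.mem_range'_1]
  cases dec y <;> simp <;> omega

lemma countP_eq_card (L : List ℕ) (hL : L.Nodup) (p : ℕ → Prop) [DecidablePred p]
    (s : Finset ℕ) (h : ∀ y, y ∈ s ↔ y ∈ L ∧ p y) :
    L.countP (fun y => decide (p y)) = s.card := by
  rw [List.countP_eq_length_filter, ← List.toFinset_card_of_nodup (hL.filter _)]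
  congr 1
  ext y
  simp [h]

lemma sum_permutations'_cons (f : List ℕ → R) (c : ℕ) (M : List ℕ) (g : ℕ → R) (s : ℕ)
    (hs : ∀ L : List ℕ, L.Perm M →
      ((List.permutations'Aux c L).map f).sum = f L * g s) :
    ((List.permutations' (c :: M)).map f).sum = ((List.permutations' M).map f).sum * g s := by
  have key : ∀ l : List (List ℕ), (∀ L ∈ l, L.Perm M) →
      ((l.flatMap (List.permutations'Aux c)).map f).sum = (l.map f).sum * g s := by
    intro l
    induction l with
    | nil => simp
    | cons L l ih =>
      intro h
      rw [List.flatMap_cons, List.map_append, List.sum_append, hs L (h L (by simp)),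
        ih (fun L' hL' => h L' (by simp [hL'])), List.map_cons, List.sum_cons, add_mul]
  exact key _ fun L hL => List.mem_permutations'.1 hL

/-- The number of allowed places for an undecorated letter `i`. -/
def undecSlots (i : ℕ) : ℕ :=
  (if κ i < κ 0 + N then 1 else 0) +
    #{t ∈ Icc 1 (i - 1) | dec t = false ∧ κ i < κ t + N}

/-- The number of allowed places for a decorated letter `i`, when the letters are `1, …, n`. -/
def decSlots (n i : ℕ) : ℕ :=
  #{t ∈ Icc 1 n | dec t = false ∧ κ i < κ t ∧ κ t < κ i + N}

variable {κ}

lemma sum_undec (n : ℕ) (hκ : ∀ i j, i < j → j ≤ n → κ i < κ j) (m : ℕ) (hm : m ≤ n) :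
    ((List.permutations' (undecList dec m)).map (wt q N κ dec 0)).sum =
      ∏ i ∈ Icc 1 m with dec i = false, qInt q (undecSlots N κ dec i) := by
  induction m with
  | zero => simp [undecList, wt]
  | succ m ih =>
    have ih := ih (by omega)
    rw [← insert_Icc_right_eq_Icc_add_one (by omega), filter_insert, undecList]
    by_cases h : dec (m + 1) = true
    · simp [h, ih]
    · have h' : dec (m + 1) = false := by simpa using h
      rw [if_neg h, if_pos h', prod_insert (by simp), ← ih, mul_comm]
      refine sum_permutations'_cons _ _ _ (qInt q) _ ?_
      intro L hL
      rw [sum_insert_undec q N κ dec (m + 1) h' L 0 (hκ _ _ (by omega) hm)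
        (fun y hy => by
          have := (mem_undecList dec m y).1 (hL.mem_iff.1 hy)
          exact ⟨hκ _ _ (by omega) hm, this.2.2⟩)]
      have hcount : L.countP (fun y => decide (κ (m + 1) < κ y + N)) =
          #{t ∈ Icc 1 (m + 1 - 1) | dec t = false ∧ κ (m + 1) < κ t + N} := by
        refine countP_eq_card L (hL.nodup_iff.2 (nodup_undecList dec m)) _ _ ?_
        intro y
        rw [hL.mem_iff, mem_undecList, mem_filter, mem_Icc]
        simp only [Nat.add_sub_cancel]
        tauto
      rw [hcount, undecSlots]
      split_ifs
      · rw [add_comm 1, qInt_succ_top]; ring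
      · simp

lemma sum_dec (hN : 0 < N) (n : ℕ) (hκ : ∀ i j, i < j → j ≤ n → κ i < κ j) (m : ℕ)
    (hm : m ≤ n) :
    ((List.permutations' (decList dec (undecList dec n) m)).map (wt q N κ dec 0)).sum =
      (∏ i ∈ Icc 1 n with dec i = false, qInt q (undecSlots N κ dec i)) *
      ∏ i ∈ Icc 1 m with dec i = true, (q * qInt q (decSlots N κ dec n i)) := by
  induction m with
  | zero => simp [decList, sum_undec q N dec n hκ n le_rfl]
  | succ m ih =>
    have ih := ih (by omega)
    rw [← insert_Icc_right_eq_Icc_add_one (by omega), filter_insert, decList]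
    by_cases h : dec (m + 1) = true
    · rw [if_pos h, if_pos h, prod_insert (by simp), mul_left_comm, ← ih, mul_comm]
      refine sum_permutations'_cons _ _ _ (fun s => q * qInt q s) _ ?_
      intro L hL
      rw [sum_insert_dec q N κ dec hN (m + 1) h L 0
        (fun y hy => by
          have := (mem_decList dec _ m y).1 (hL.mem_iff.1 hy)
          rw [mem_undecList] at this
          rcases this with ⟨h1, h2, h3⟩ | ⟨h1, h2, h3⟩
          · have hne : y ≠ m + 1 := by rintro rfl; simp [h] at h3
            refine ⟨?_, by simp [h3]⟩
            rcases lt_or_gt_of_ne hne with hlt | hgt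
            · exact (hκ _ _ hlt hm).ne
            · exact (hκ _ _ hgt h2).ne'
          · have := hκ y (m + 1) (by omega) hm
            exact ⟨this.ne, fun _ => this⟩)]
      have h0 : ¬ κ (m + 1) < κ 0 := by
        have := hκ 0 (m + 1) (by omega) hm
        omega
      have hcount : L.countP (fun y => decide (invPair N κ dec y (m + 1))) =
          decSlots N κ dec n (m + 1) := by
        refine countP_eq_card L (hL.nodup_iff.2 (nodup_decList dec n m)) _ _ ?_
        intro y
        rw [hL.mem_iff, mem_decList, mem_undecList, mem_filter, mem_Icc, invPair]
        cases dec y <;> simp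
      rw [hcount, if_neg h0, zero_add]
    · simp [h, ih]

/-- The total weight of all arrangements of the letters `1, …, n`. -/
lemma sum_arrangements (hN : 0 < N) (n : ℕ) (hκ : ∀ i j, i < j → j ≤ n → κ i < κ j) :
    ((List.permutations' (List.range' 1 n)).map (wt q N κ dec 0)).sum =
      q ^ #{i ∈ Icc 1 n | dec i = true} * ∏ i ∈ Icc 1 n,
        qInt q (if dec i = true then decSlots N κ dec n i else undecSlots N κ dec i) := by
  rw [← ((decList_perm dec n).permutations'.map (wt q N κ dec 0)).sum_eq,
    sum_dec q N dec hN n hκ n le_rfl, prod_mul_distrib, prod_const,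
    ← prod_filter_mul_prod_filter_not (Icc 1 n) (fun i => dec i = true)]
  have h1 : ∏ i ∈ Icc 1 n with dec i = true, qInt q (decSlots N κ dec n i) =
      ∏ i ∈ Icc 1 n with dec i = true,
        qInt q (if dec i = true then decSlots N κ dec n i else undecSlots N κ dec i) :=
    prod_congr rfl fun i hi => by rw [if_pos (mem_filter.1 hi).2]
  have h2 : ∏ i ∈ Icc 1 n with dec i = false, qInt q (undecSlots N κ dec i) =
      ∏ i ∈ Icc 1 n with ¬ dec i = true,
        qInt q (if dec i = true then decSlots N κ dec n i else undecSlots N κ dec i) := by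
    refine prod_congr (by ext; simp) fun i hi => ?_
    rw [if_neg (mem_filter.1 hi).2]
  rw [h1, h2]
  ring

/-- The weight of a word given by its letters `f s, …, f (s + m - 1)`, in closed form. -/
lemma wt_range' (f : ℕ → ℕ) (m : ℕ) : ∀ s, wt q N κ dec (f s) ((List.range' (s + 1) m).map f) =
    if ∀ i ∈ Icc (s + 1) (s + m), okStep N κ dec (f (i - 1)) (f i) then
      q ^ (∑ i ∈ Icc (s + 1) (s + m), #{j ∈ Icc (i + 1) (s + m) | invPair N κ dec (f i) (f j)})
    else 0 := by
  induction m with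
  | zero => intro s; simp [wt]
  | succ m ih =>
    intro s
    rw [List.range'_succ, List.map_cons, wt, ih (s + 1)]
    have hI : Icc (s + 1) (s + (m + 1)) = insert (s + 1) (Icc (s + 1 + 1) (s + 1 + m)) := by
      ext i; simp only [mem_insert, mem_Icc]; omega
    have hall : (∀ i ∈ Icc (s + 1) (s + (m + 1)), okStep N κ dec (f (i - 1)) (f i)) ↔
        okStep N κ dec (f s) (f (s + 1)) ∧
          ∀ i ∈ Icc (s + 1 + 1) (s + 1 + m), okStep N κ dec (f (i - 1)) (f i) := by
      rw [hI, forall_mem_insert, Nat.add_sub_cancel]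
    have hcount : ((List.range' (s + 1 + 1) m).map f).countP
        (fun x => decide (invPair N κ dec (f (s + 1)) x)) =
        #{j ∈ Icc (s + 1 + 1) (s + (m + 1)) | invPair N κ dec (f (s + 1)) (f j)} := by
      rw [List.countP_map]
      refine countP_eq_card _ List.nodup_range' _ _ ?_
      intro y
      rw [mem_filter, mem_Icc, List.mem_range'_1]
      apply and_congr_left'
      omega
    rw [hcount]
    simp only [hall]
    rw [hI, sum_insert (by simp), pow_add]
    have hs : s + (m + 1) = s + 1 + m := by omega
    simp only [hs]
    split_ifs <;> simp_all

end Arrangements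

end QEuler

/-! ### Runs, keys and schedule numbers -/

namespace QEuler

section Runs

variable (E : ℕ → ℕ)

/-- The index `j` of the maximal decreasing run `r_j` of `E 0, E 1, …` containing the given
position, that is, the number of ascents before that position. -/
def runIdx : ℕ → ℕ
  | 0 => 0
  | j + 1 => runIdx j + if E j < E (j + 1) then 1 else 0

/-- The key of a position of a word with entries at most `n`. For positions of the diagonal word,
key order is reading order, and both the step conditions of a path and its diagonal inversions
compare the difference of two keys with `0` and `n + 1`. -/
def key (n : ℕ) (j : ℕ) : ℤ := runIdx E j * (n + 1) - E j

lemma runIdx_mono : Monotone (runIdx E) :=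
  monotone_nat_of_le_succ fun j => by rw [runIdx]; omega

lemma lex_iff (n a b x y : ℤ) (hx : 0 ≤ x) (hx' : x ≤ n) (hy : 0 ≤ y) (hy' : y ≤ n) :
    a * (n + 1) - x < b * (n + 1) - y ↔ a < b ∨ (a = b ∧ y < x) := by
  constructor
  · intro h
    rcases lt_trichotomy a b with hab | rfl | hab
    · exact Or.inl hab
    · right; exact ⟨rfl, by linarith⟩
    · exfalso; nlinarith
  · rintro (h | ⟨rfl, h⟩)
    · nlinarith
    · linarith

variable {E} {n : ℕ}

lemma key_lt_iff {i j : ℕ} (hi : E i ≤ n) (hj : E j ≤ n) :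
    key E n i < key E n j ↔ runIdx E i < runIdx E j ∨ (runIdx E i = runIdx E j ∧ E j < E i) := by
  have := lex_iff n (runIdx E i) (runIdx E j) (E i) (E j) (by omega) (by omega) (by omega)
    (by omega)
  rw [key, key, this]
  norm_cast

lemma key_lt_add_iff {i j : ℕ} (hi : E i ≤ n) (hj : E j ≤ n) :
    key E n i < key E n j + (n + 1) ↔
      runIdx E i < runIdx E j + 1 ∨ (runIdx E i = runIdx E j + 1 ∧ E j < E i) := by
  have := lex_iff n (runIdx E i) (runIdx E j + 1) (E i) (E j) (by omega) (by omega) (by omega)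
    (by omega)
  have h2 : key E n j + (n + 1) = ((runIdx E j : ℤ) + 1) * (n + 1) - E j := by rw [key]; ring
  rw [h2, key, this]
  norm_cast

/-- The properties of the word `0, σ_1, …, σ_n` of a permutation on which the run
decomposition depends. -/
structure IsWord (E : ℕ → ℕ) (n : ℕ) : Prop where
  zero : E 0 = 0
  pos : ∀ i, 1 ≤ i → i ≤ n → 1 ≤ E i
  le : ∀ i, E i ≤ n
  inj : ∀ i j, i ≤ n → j ≤ n → E i = E j → i = j

namespace IsWord

variable (hE : IsWord E n)
include hE

lemma ne_succ {j : ℕ} (hj : j + 1 ≤ n) : E j ≠ E (j + 1) := fun h => by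
  have := hE.inj j (j + 1) (by omega) hj h
  omega

lemma key_lt {i j : ℕ} (hij : i < j) (hj : j ≤ n) : key E n i < key E n j := by
  induction j, hij using Nat.le_induction with
  | base =>
    change key E n i < key E n (i + 1)
    rw [key_lt_iff (hE.le _) (hE.le _), runIdx]
    have := hE.ne_succ hj
    split_ifs <;> omega
  | succ j hij ih =>
    refine (ih (by omega)).trans ?_
    rw [key_lt_iff (hE.le _) (hE.le _), runIdx]
    have := hE.ne_succ hj
    split_ifs <;> omega

lemma key_lt_iff_lt {i j : ℕ} (hi : i ≤ n) (hj : j ≤ n) : key E n i < key E n j ↔ i < j := by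
  constructor
  · intro h
    by_contra hij
    rcases Nat.lt_or_ge j i with h' | h'
    · have := hE.key_lt h' hi; omega
    · obtain rfl : i = j := by omega
      omega
  · intro h; exact hE.key_lt h hj

lemma runIdx_one (hn : 1 ≤ n) : runIdx E 1 = 1 := by
  have := hE.pos 1 le_rfl hn
  simp only [runIdx, hE.zero, zero_add]
  rw [if_pos (by omega)]

lemma one_le_runIdx {i : ℕ} (hi : 1 ≤ i) (hn : i ≤ n) : 1 ≤ runIdx E i := by
  rw [← hE.runIdx_one (by omega)]
  exact runIdx_mono E hi

lemma decOn_iff {p q : ℕ} (hpq : p ≤ q) (hq : q ≤ n) :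
    decOn E p q ↔ runIdx E p = runIdx E q := by
  induction q, hpq using Nat.le_induction with
  | base => simp [decOn]
  | succ q hpq ih =>
    have ih := ih (by omega)
    have h1 : decOn E p (q + 1) ↔ decOn E p q ∧ E (q + 1) < E q := by
      simp only [decOn, mem_Ico]
      constructor
      · intro h
        exact ⟨fun t ht => h t (by omega), h q (by omega)⟩
      · rintro ⟨h, h'⟩ t ht
        rcases Nat.lt_or_ge t q with h2 | h2
        · exact h t (by omega)
        · obtain rfl : t = q := by omega
          exact h'
    have := hE.ne_succ hq
    have := runIdx_mono E hpq
    rw [h1, ih, runIdx]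
    split_ifs <;> omega

lemma runStart_le_iff {i t : ℕ} (hi : i ≤ n) (ht : t ≤ i) :
    runStart E i ≤ t ↔ runIdx E t = runIdx E i := by
  rw [← hE.decOn_iff ht hi]
  constructor
  · intro h s hs
    have hspec : decOn E (runStart E i) i := by
      unfold runStart
      exact Nat.find_spec (p := fun p => decOn E p i) _
    exact hspec s (by rw [mem_Ico] at hs ⊢; omega)
  · intro h
    unfold runStart
    exact Nat.find_min' (p := fun p => decOn E p i) _ h

lemma runStart_le {i : ℕ} (hi : i ≤ n) : runStart E i ≤ i :=
  (hE.runStart_le_iff hi le_rfl).2 rfl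

omit hE in
lemma runEnd_le (i : ℕ) : runEnd n E i ≤ n := Nat.findGreatest_le _

lemma le_runEnd_iff {i t : ℕ} (hit : i ≤ t) (ht : t ≤ n) :
    t ≤ runEnd n E i ↔ runIdx E t = runIdx E i := by
  rw [eq_comm, ← hE.decOn_iff hit ht]
  constructor
  · intro h s hs
    have hspec : decOn E i (runEnd n E i) := by
      unfold runEnd
      exact Nat.findGreatest_spec (P := fun q => decOn E i q) (m := i) (by omega) (by simp [decOn])
    exact hspec s (by rw [mem_Ico] at hs ⊢; omega)
  · intro h
    unfold runEnd
    exact Nat.le_findGreatest (P := fun q => decOn E i q) ht h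

lemma le_runEnd {i : ℕ} (hi : i ≤ n) : i ≤ runEnd n E i :=
  (hE.le_runEnd_iff le_rfl hi).2 rfl

lemma mem_run {i t : ℕ} (hi : i ≤ n) :
    t ∈ Icc (runStart E i) (runEnd n E i) ↔ t ≤ n ∧ runIdx E t = runIdx E i := by
  have h1 := runEnd_le (E := E) (n := n) i
  have h2 := hE.le_runEnd hi
  have h3 := hE.runStart_le hi
  rw [mem_Icc]
  rcases Nat.lt_or_ge t i with h | h
  · rw [hE.runStart_le_iff hi h.le]; omega
  · by_cases htn : t ≤ n
    · rw [hE.le_runEnd_iff h htn]; omega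
    · omega

lemma runIdx_runStart_pred {i : ℕ} (hi : i ≤ n) (h0 : runStart E i ≠ 0) :
    runIdx E (runStart E i - 1) + 1 = runIdx E i := by
  have h3 := hE.runStart_le hi
  have h1 := (hE.runStart_le_iff hi (t := runStart E i) h3).1 le_rfl
  have h2 := hE.runStart_le_iff hi (t := runStart E i - 1) (by omega)
  have h4 : runIdx E (runStart E i - 1 + 1) = _ := runIdx.eq_2 E _
  rw [Nat.sub_add_cancel (by omega)] at h4
  split_ifs at h4 <;> omega

lemma runIdx_runEnd_succ {i : ℕ} (hi : i ≤ n) (h0 : runEnd n E i < n) :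
    runIdx E (runEnd n E i + 1) = runIdx E i + 1 := by
  have h3 := hE.le_runEnd hi
  have h1 := (hE.le_runEnd_iff (i := i) (t := runEnd n E i) h3 h0.le).1 le_rfl
  have h2 := hE.le_runEnd_iff (i := i) (t := runEnd n E i + 1) (by omega) h0
  have h4 : runIdx E (runEnd n E i + 1) = _ := runIdx.eq_2 E _
  split_ifs at h4 <;> omega

lemma mem_prev_run {i t : ℕ} (hi : i ≤ n) (h0 : runStart E i ≠ 0) :
    t ∈ Icc (runStart E (runStart E i - 1)) (runStart E i - 1) ↔
      t ≤ n ∧ runIdx E t + 1 = runIdx E i := by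
  have h3 := hE.runStart_le hi
  have h1 := hE.runIdx_runStart_pred hi h0
  rw [mem_Icc]
  rcases Nat.lt_or_ge t (runStart E i) with h | h
  · rw [hE.runStart_le_iff (by omega) (by omega)]; omega
  · have := runIdx_mono E h
    have := (hE.runStart_le_iff hi (t := runStart E i) h3).1 le_rfl
    omega

lemma mem_next_run {i t : ℕ} (hi : i ≤ n) (h0 : runEnd n E i < n) :
    t ∈ Icc (runEnd n E i + 1) (runEnd n E (runEnd n E i + 1)) ↔
      t ≤ n ∧ runIdx E t = runIdx E i + 1 := by
  have h3 := hE.le_runEnd hi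
  have h1 := hE.runIdx_runEnd_succ hi h0
  have h4 := runEnd_le (E := E) (n := n) (runEnd n E i + 1)
  rw [mem_Icc]
  rcases Nat.lt_or_ge (runEnd n E i) t with h | h
  · by_cases htn : t ≤ n
    · rw [hE.le_runEnd_iff (by omega) htn]; omega
    · omega
  · have := runIdx_mono E h
    have := (hE.le_runEnd_iff (i := i) (t := runEnd n E i) h3 h0.le).1 le_rfl
    omega

/-- The schedule number of an undecorated letter counts the places where it can be inserted. -/
lemma schedNum_undec {dec : ℕ → Bool} (h0 : dec 0 = false) {i : ℕ} (hi : 1 ≤ i) (hin : i ≤ n)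
    (hd : dec i = false) :
    schedNum n E dec i = undecSlots (n + 1) (key E n) dec i := by
  have hs : runStart E i ≠ 0 := by
    intro h
    have h1 := (hE.runStart_le_iff hin (t := 0) (by omega)).1 (by omega)
    have h2 := hE.one_le_runIdx hi hin
    rw [← h1, runIdx] at h2
    omega
  have hR : undecSlots (n + 1) (key E n) dec i =
      #{t ∈ range i | dec t = false ∧ key E n i < key E n t + (n + 1)} := by
    have : range i = insert 0 (Icc 1 (i - 1)) := by
      ext t; simp only [mem_range, mem_insert, mem_Icc]; omega
    rw [undecSlots, this, filter_insert]
    split_ifs with h1 h2 h2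
    · rw [card_insert_of_notMem (by simp), add_comm]
    · exact absurd ⟨h0, h1⟩ h2
    · exact absurd h2.2 h1
    · rw [zero_add]
  rw [schedNum, if_neg (by simp [hd]), if_neg hs, hR, ← card_union_of_disjoint]
  · congr 1
    ext t
    rw [mem_union, mem_filter, mem_filter, mem_filter, hE.mem_run hin, hE.mem_prev_run hin hs,
      mem_range, key_lt_add_iff (hE.le _) (hE.le _)]
    by_cases htn : t ≤ n
    · have h1 := hE.key_lt_iff_lt htn hin
      rw [key_lt_iff (hE.le _) (hE.le _)] at h1
      rcases lt_trichotomy (runIdx E t + 1) (runIdx E i) with h | h | h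
      · omega
      · constructor
        · rintro (h' | h')
          · omega
          · exact ⟨h1.1 (by omega), h'.2.1, Or.inr ⟨h.symm, h'.2.2⟩⟩
        · rintro ⟨a, b, c⟩
          exact Or.inr ⟨⟨htn, h⟩, b, by omega⟩
      · constructor
        · rintro (h' | h')
          · exact ⟨h1.1 (by omega), h'.2.1, Or.inl h⟩
          · omega
        · rintro ⟨a, b, c⟩
          exact Or.inl ⟨⟨htn, by omega⟩, b, by omega⟩
    · omega
  · rw [disjoint_left]
    intro t h1 h2
    rw [mem_filter, hE.mem_run hin] at h1
    rw [mem_filter, hE.mem_prev_run hin hs] at h2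
    omega

/-- The schedule number of a decorated letter counts the places where it can be inserted. -/
lemma schedNum_dec {dec : ℕ → Bool} {i : ℕ} (hi : 1 ≤ i) (hin : i ≤ n) (hd : dec i = true) :
    schedNum n E dec i = decSlots (n + 1) (key E n) dec n i := by
  have h2 : (if runEnd n E i < n then
      #{t ∈ Icc (runEnd n E i + 1) (runEnd n E (runEnd n E i + 1)) | dec t = false ∧ E i < E t}
      else 0) =
      #{t ∈ Icc 1 n | dec t = false ∧ runIdx E t = runIdx E i + 1 ∧ E i < E t} := by
    split_ifs with h
    · congr 1
      ext t
      rw [mem_filter, mem_filter, hE.mem_next_run hin h, mem_Icc]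
      have h3 : 1 ≤ t ∨ t = 0 := by omega
      rcases h3 with h3 | rfl
      · tauto
      · simp [runIdx]
    · symm
      rw [card_eq_zero, filter_eq_empty_iff]
      intro t ht h'
      rw [mem_Icc] at ht
      have h3 := hE.le_runEnd hin
      have h4 := (hE.le_runEnd_iff (i := i) (t := runEnd n E i) h3 (runEnd_le _)).1 le_rfl
      have h5 := runIdx_mono E (show t ≤ runEnd n E i by omega)
      omega
  rw [schedNum, if_pos hd, h2, decSlots, ← card_union_of_disjoint]
  · congr 1
    ext t
    rw [mem_union, mem_filter, mem_filter, mem_filter, hE.mem_run hin, mem_Icc,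
      key_lt_add_iff (hE.le _) (hE.le _), key_lt_iff (hE.le _) (hE.le _)]
    have h3 := hE.one_le_runIdx hi hin
    have h4 : runIdx E 0 = 0 := rfl
    have h5 : 1 ≤ t ∨ t = 0 := by omega
    rcases h5 with h5 | rfl
    · have : t ≤ n ↔ 1 ≤ t ∧ t ≤ n := by tauto
      constructor
      · rintro (⟨a, b, c⟩ | ⟨a, b, c⟩)
        · exact ⟨by omega, b, by omega, by omega⟩
        · exact ⟨by omega, b, by omega, by omega⟩
      · rintro ⟨a, b, c, d⟩
        rcases d with d | d
        · exact Or.inl ⟨by omega, b, by omega⟩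
        · exact Or.inr ⟨by omega, b, by omega⟩
    · omega
  · rw [disjoint_left]
    intro t h1 h2
    rw [mem_filter, hE.mem_run hin] at h1
    rw [mem_filter] at h2
    omega

lemma schedNum_eq {dec : ℕ → Bool} (h0 : dec 0 = false) {i : ℕ} (hi : i ∈ Icc 1 n) :
    schedNum n E dec i = if dec i = true then decSlots (n + 1) (key E n) dec n i
      else undecSlots (n + 1) (key E n) dec i := by
  rw [mem_Icc] at hi
  split_ifs with h
  · exact hE.schedNum_dec hi.1 hi.2 h
  · exact hE.schedNum_undec h0 hi.1 hi.2 (by simpa using h)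

/-- `revmaj` adds up the areas of the letters: an ascent contributes the number of letters
to its right, each of which it puts on a higher diagonal. -/
lemma sum_runIdx_sub_one : ∑ j ∈ Icc 1 n, (runIdx E j - 1) = revmaj n E := by
  have h1 : revmaj n E = ∑ t ∈ Ico 1 n, if E t < E (t + 1) then n - t else 0 := by
    rw [revmaj, maj]
    refine sum_nbij' (fun i => n - i) (fun i => n - i) ?_ ?_ ?_ ?_ ?_
    · intro i hi; rw [mem_Icc] at hi; rw [mem_Ico]; omega
    · intro i hi; rw [mem_Ico] at hi; rw [mem_Icc]; omega
    · intro i hi; rw [mem_Icc] at hi; omega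
    · intro i hi; rw [mem_Ico] at hi; omega
    · intro i hi
      rw [mem_Icc] at hi
      rw [show n + 1 - (i + 1) = n - i by omega, show n + 1 - i = n - i + 1 by omega,
        show n - (n - i) = i by omega]
  have h2 : ∀ m, 1 ≤ m → m ≤ n →
      runIdx E m = 1 + ∑ t ∈ Ico 1 m, if E t < E (t + 1) then 1 else 0 := by
    intro m hm
    induction m, hm using Nat.le_induction with
    | base => intro hn; simp [hE.runIdx_one hn]
    | succ m hm ih =>
      intro hn
      rw [runIdx, ih (by omega), sum_Ico_succ_top hm]
      ring
  have h3 : ∀ m, m ≤ n → ∑ j ∈ Icc 1 m, (runIdx E j - 1) =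
      ∑ t ∈ Ico 1 m, if E t < E (t + 1) then m - t else 0 := by
    intro m
    induction m with
    | zero => simp
    | succ m ih =>
      intro hm
      rw [sum_Icc_succ_top (by omega), ih (by omega), h2 (m + 1) (by omega) hm,
        Nat.add_sub_cancel_left]
      have h4 : ∑ t ∈ Ico 1 m, (if E t < E (t + 1) then m - t else 0) =
          ∑ t ∈ Ico 1 (m + 1), (if E t < E (t + 1) then m - t else 0) := by
        rcases Nat.eq_zero_or_pos m with rfl | h
        · simp
        · rw [sum_Ico_succ_top h]; simp
      rw [h4, ← sum_add_distrib]
      refine sum_congr rfl fun t ht => ?_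
      rw [mem_Ico] at ht
      split_ifs <;> omega
  rw [h1, h3 n le_rfl]

end IsWord

end Runs

end QEuler

/-! ### From reading orders to labelled paths -/

namespace QEuler

section Paths

variable {n : ℕ}

lemma ent_of_mem (σ : Equiv.Perm (Fin n)) {i : ℕ} (h : 1 ≤ i ∧ i ≤ n) :
    ent σ i = (σ ⟨i - 1, by omega⟩ : ℕ) + 1 := dif_pos h

lemma ent_zero (σ : Equiv.Perm (Fin n)) : ent σ 0 = 0 := dif_neg (by omega)

lemma ent_succ (σ : Equiv.Perm (Fin n)) (i : Fin n) : ent σ (i + 1) = σ i + 1 := by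
  rw [ent_of_mem σ (by omega)]
  rfl

lemma ent_mem (σ : Equiv.Perm (Fin n)) {i : ℕ} (h : 1 ≤ i ∧ i ≤ n) :
    1 ≤ ent σ i ∧ ent σ i ≤ n := by
  rw [ent_of_mem σ h]
  omega

lemma isWord_ent (σ : Equiv.Perm (Fin n)) : IsWord (ent σ) n where
  zero := ent_zero σ
  pos i hi hn := (ent_mem σ ⟨hi, hn⟩).1
  le i := by
    by_cases h : 1 ≤ i ∧ i ≤ n
    · exact (ent_mem σ h).2
    · rw [ent, dif_neg h]; omega
  inj i j hi hj h := by
    rcases Nat.eq_zero_or_pos i with rfl | hi0 <;> rcases Nat.eq_zero_or_pos j with rfl | hj0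
    · rfl
    · have := (ent_mem σ ⟨hj0, hj⟩).1; rw [ent_zero] at h; omega
    · have := (ent_mem σ ⟨hi0, hi⟩).1; rw [ent_zero] at h; omega
    · rw [ent_of_mem σ ⟨hi0, hi⟩, ent_of_mem σ ⟨hj0, hj⟩, Nat.add_right_cancel_iff,
        Fin.val_inj, σ.apply_eq_iff_eq, Fin.mk.injEq] at h
      omega

lemma ent_surj (σ : Equiv.Perm (Fin n)) {j : ℕ} (h : 1 ≤ j ∧ j ≤ n) :
    ∃ i, (1 ≤ i ∧ i ≤ n) ∧ ent σ i = j := by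
  refine ⟨(σ.symm ⟨j - 1, by omega⟩ : ℕ) + 1, by omega, ?_⟩
  rw [ent_succ, Equiv.apply_symm_apply]
  change j - 1 + 1 = j
  omega

lemma ent_trans (θ σ : Equiv.Perm (Fin n)) (i : ℕ) : ent (θ.trans σ) i = ent σ (ent θ i) := by
  by_cases h : 1 ≤ i ∧ i ≤ n
  · rw [ent_of_mem _ h, ent_of_mem θ h, ent_succ]
    rfl
  · rw [ent, dif_neg h, ent.eq_1 θ, dif_neg h, ent_zero]

lemma isDec_succ (D : Finset (Fin n)) (i : Fin n) : isDec D (i + 1) = decide (i ∈ D) := by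
  rw [isDec, dif_pos (by omega)]
  rfl

lemma isDec_zero (D : Finset (Fin n)) : isDec D 0 = false := dif_neg (by omega)

lemma isDec_comp (D : Finset (Fin n)) (θ : Equiv.Perm (Fin n)) (i : ℕ) :
    isDec {x | θ x ∈ D} i = isDec D (ent θ i) := by
  by_cases h : 1 ≤ i ∧ i ≤ n
  · rw [ent_of_mem θ h, isDec_succ, isDec, dif_pos h]
    simp
  · rw [isDec, dif_neg h, ent, dif_neg h, isDec_zero]

lemma runIdx_le (E : ℕ → ℕ) (j : ℕ) : runIdx E j ≤ j := by
  induction j with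
  | zero => simp [runIdx]
  | succ j ih => rw [runIdx]; split_ifs <;> omega

/-- The labelled path whose `i`-th north step carries the `θ i`-th letter of the decorated
permutation `(σ, D)`, on the diagonal indexed by the run of this letter. -/
def toPath (σ : Equiv.Perm (Fin n)) (D : Finset (Fin n)) (θ : Equiv.Perm (Fin n)) :
    PathData n :=
  (fun i => ⟨runIdx (ent σ) (θ i + 1) - 1, by have := runIdx_le (ent σ) (θ i + 1); omega⟩,
    θ.trans σ, ({x | θ x ∈ D} : Finset (Fin n)))

variable (σ : Equiv.Perm (Fin n)) (D : Finset (Fin n)) (θ : Equiv.Perm (Fin n))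

lemma lbl_toPath (i : ℕ) : lbl (toPath σ D θ) i = ent σ (ent θ i) := ent_trans θ σ i

lemma pdec_toPath (i : ℕ) : pdec (toPath σ D θ) i = isDec D (ent θ i) := isDec_comp D θ i

lemma aw_toPath {i : ℕ} (h : 1 ≤ i ∧ i ≤ n) :
    aw (toPath σ D θ) i + 1 = runIdx (ent σ) (ent θ i) := by
  have h1 := ent_mem θ h
  have h2 := (isWord_ent σ).one_le_runIdx h1.1 h1.2
  rw [aw, dif_pos h, ent_of_mem θ h] at *
  change runIdx (ent σ) _ - 1 + 1 = _
  omega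

lemma isValidPath_toPath : IsValidPath (toPath σ D θ) ↔ ∀ i ∈ Icc 1 n,
    okStep (n + 1) (key (ent σ) n) (isDec D) (ent θ (i - 1)) (ent θ i) := by
  have hE := isWord_ent σ
  have key1 : ∀ i, 2 ≤ i → i ≤ n →
      ((aw (toPath σ D θ) i ≤ aw (toPath σ D θ) (i - 1) + 1 ∧
        (aw (toPath σ D θ) i = aw (toPath σ D θ) (i - 1) + 1 →
          lbl (toPath σ D θ) (i - 1) < lbl (toPath σ D θ) i) ∧
        (pdec (toPath σ D θ) i = true → ContractibleValley (toPath σ D θ) i)) ↔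
      okStep (n + 1) (key (ent σ) n) (isDec D) (ent θ (i - 1)) (ent θ i)) := by
    intro i h2 hn
    have e1 := aw_toPath σ D θ (i := i) (by omega)
    have e2 := aw_toPath σ D θ (i := i - 1) (by omega)
    rw [ContractibleValley, okStep, key_lt_add_iff (hE.le _) (hE.le _),
      key_lt_iff (hE.le _) (hE.le _), lbl_toPath, lbl_toPath, pdec_toPath]
    have e3 : (2 ≤ i ∧ i ≤ n ∧ (aw (toPath σ D θ) i < aw (toPath σ D θ) (i - 1) ∨
        aw (toPath σ D θ) (i - 1) = aw (toPath σ D θ) i ∧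
          ent σ (ent θ (i - 1)) < ent σ (ent θ i))) ↔
        (runIdx (ent σ) (ent θ i) < runIdx (ent σ) (ent θ (i - 1)) ∨
        runIdx (ent σ) (ent θ i) = runIdx (ent σ) (ent θ (i - 1)) ∧
          ent σ (ent θ (i - 1)) < ent σ (ent θ i)) := by omega
    rw [e3, ← and_assoc]
    apply and_congr_left'
    omega
  have key2 : 1 ≤ n → ((aw (toPath σ D θ) 1 = 0 ∧
      (pdec (toPath σ D θ) 1 = true → ContractibleValley (toPath σ D θ) 1)) ↔
      okStep (n + 1) (key (ent σ) n) (isDec D) (ent θ (1 - 1)) (ent θ 1)) := by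
    intro hn
    have e1 := aw_toPath σ D θ (i := 1) (by omega)
    have h1 := ent_mem θ (i := 1) (by omega)
    have h2 := hE.pos _ h1.1 h1.2
    rw [ContractibleValley, okStep, key_lt_add_iff (hE.le _) (hE.le _),
      key_lt_iff (hE.le _) (hE.le _), pdec_toPath, Nat.sub_self, ent_zero, ent_zero,
      show runIdx (ent σ) 0 = 0 from rfl]
    refine and_congr (by omega) (imp_congr_right fun _ => by omega)
  constructor
  · rintro ⟨v1, v2, v3, v4⟩ i hi
    rw [mem_Icc] at hi
    rcases hi.1.eq_or_lt with h | h
    · subst h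
      exact (key2 hi.2).1 ⟨v1 hi.2, v4 1 (mem_Icc.2 hi)⟩
    · have hm : i ∈ Icc 2 n := mem_Icc.2 ⟨h, hi.2⟩
      exact (key1 i h hi.2).1 ⟨v2 i hm, v3 i hm, v4 i (mem_Icc.2 hi)⟩
  · intro h
    refine ⟨fun hn => ((key2 hn).2 (h 1 (mem_Icc.2 ⟨le_rfl, hn⟩))).1, fun i hi => ?_,
      fun i hi => ?_, fun i hi => ?_⟩
    · rw [mem_Icc] at hi
      exact ((key1 i hi.1 hi.2).2 (h i (mem_Icc.2 (by omega)))).1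
    · rw [mem_Icc] at hi
      exact ((key1 i hi.1 hi.2).2 (h i (mem_Icc.2 (by omega)))).2.1
    · have hi' := mem_Icc.1 hi
      rcases hi'.1.eq_or_lt with h1 | h1
      · subst h1
        exact ((key2 hi'.2).2 (h 1 hi)).2
      · exact ((key1 i h1 hi'.2).2 (h i hi)).2.2

lemma primary_or_secondary_iff {i j : ℕ} (hi : 1 ≤ i ∧ i ≤ n) (hj : 1 ≤ j ∧ j ≤ n) :
    PrimaryDinv (toPath σ D θ) i j ∨ SecondaryDinv (toPath σ D θ) i j ↔
      invPair (n + 1) (key (ent σ) n) (isDec D) (ent θ i) (ent θ j) := by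
  have hE := isWord_ent σ
  have e1 := aw_toPath σ D θ hi
  have e2 := aw_toPath σ D θ hj
  rw [PrimaryDinv, SecondaryDinv, invPair, key_lt_add_iff (hE.le _) (hE.le _),
    key_lt_iff (hE.le _) (hE.le _), lbl_toPath, lbl_toPath, pdec_toPath]
  constructor
  · rintro (⟨a, b, c⟩ | ⟨a, b, c⟩)
    · exact ⟨by omega, by omega, c⟩
    · exact ⟨by omega, by omega, c⟩
  · rintro ⟨a, b, c⟩
    by_cases h : aw (toPath σ D θ) i = aw (toPath σ D θ) j
    · exact Or.inl ⟨h, by omega, c⟩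
    · exact Or.inr ⟨by omega, by omega, c⟩

lemma card_dinvPairs_toPath : #(dinvPairs (toPath σ D θ)) =
    ∑ i ∈ Icc 1 n, #{j ∈ Icc (i + 1) n |
      invPair (n + 1) (key (ent σ) n) (isDec D) (ent θ i) (ent θ j)} := by
  rw [dinvPairs, card_filter, sum_product]
  refine sum_congr rfl fun i hi => ?_
  rw [mem_Icc] at hi
  rw [← card_filter]
  congr 1
  ext j
  rw [mem_filter, mem_filter, mem_Icc, mem_Icc]
  constructor
  · rintro ⟨a, b, c⟩
    exact ⟨⟨b, a.2⟩, (primary_or_secondary_iff σ D θ hi a).1 c⟩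
  · rintro ⟨⟨a, b⟩, c⟩
    have h : 1 ≤ j ∧ j ≤ n := ⟨by omega, b⟩
    exact ⟨h, a, (primary_or_secondary_iff σ D θ hi h).2 c⟩

lemma card_dec_toPath : #(toPath σ D θ).2.2 = #D := by
  change #({x | θ x ∈ D} : Finset (Fin n)) = #D
  have : ({x | θ x ∈ D} : Finset (Fin n)) = D.map θ.symm.toEmbedding := by
    ext x
    simp only [mem_filter, mem_univ, true_and, mem_map_equiv, Equiv.symm_symm]
  rw [this, card_map]

lemma sum_ent {M : Type*} [AddCommMonoid M] (g : ℕ → M) :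
    ∑ i ∈ Icc 1 n, g (ent θ i) = ∑ i ∈ Icc 1 n, g i := by
  refine sum_bij (fun i _ => ent θ i) ?_ ?_ ?_ ?_
  · intro i hi; rw [mem_Icc] at *; exact ent_mem θ hi
  · intro i hi j hj h; rw [mem_Icc] at *; exact (isWord_ent θ).inj i j hi.2 hj.2 h
  · intro j hj
    rw [mem_Icc] at hj
    obtain ⟨i, hi, h⟩ := ent_surj θ hj
    exact ⟨i, mem_Icc.2 hi, h⟩
  · intro i _; rfl

lemma area_toPath : area (toPath σ D θ) = revmaj n (ent σ) := by
  rw [← (isWord_ent σ).sum_runIdx_sub_one, ← sum_ent θ, area]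
  refine sum_congr rfl fun i hi => ?_
  have := aw_toPath σ D θ (mem_Icc.1 hi)
  omega

/-- A word which starts at a key at most `κ z` first exceeds `κ z` at an undecorated letter, of key
less than `κ z + N`.  Applied to the part of a valid path before a decorated letter `z`, this shows
that `z` is the right end of a diagonal inversion. -/
lemma exists_invPair (N : ℤ) (κ : ℕ → ℤ) (dec : ℕ → Bool) (f : ℕ → ℕ) (z : ℕ)
    (hz : κ (f 0) ≤ κ z) (i : ℕ) (h : ∀ j ∈ Icc 1 i, okStep N κ dec (f (j - 1)) (f j))
    (hi : κ z < κ (f i)) : ∃ j ∈ Icc 1 i, invPair N κ dec (f j) z := by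
  induction i with
  | zero => omega
  | succ i ih =>
    by_cases h1 : κ z < κ (f i)
    · obtain ⟨j, hj, hj'⟩ := ih (fun j hj => h j (by rw [mem_Icc] at *; omega)) h1
      exact ⟨j, by rw [mem_Icc] at *; omega, hj'⟩
    · -- the word jumps over the key of `z`, which only an undecorated letter can do
      refine ⟨i + 1, by simp, hi, ?_, ?_⟩
      · have := (h (i + 1) (by simp)).1
        rw [Nat.add_sub_cancel] at this
        omega
      · by_contra hd
        have := (h (i + 1) (by simp)).2 (by simpa using hd)
        rw [Nat.add_sub_cancel] at this
        omega

lemma card_le_dinvPairs (hv : IsValidPath (toPath σ D θ)) :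
    #D ≤ #(dinvPairs (toPath σ D θ)) := by
  have hE := isWord_ent σ
  rw [isValidPath_toPath] at hv
  have hsub : (toPath σ D θ).2.2.image (fun x : Fin n => (x : ℕ) + 1) ⊆
      (dinvPairs (toPath σ D θ)).image Prod.snd := by
    intro y hy
    rw [mem_image] at hy
    obtain ⟨x, hx, rfl⟩ := hy
    have hxD : isDec D (ent θ (x + 1)) = true := by
      rw [← isDec_comp, isDec_succ]
      have hx' : x ∈ ({x | θ x ∈ D} : Finset (Fin n)) := hx
      exact decide_eq_true hx'
    have hx1 : 1 ≤ (x : ℕ) + 1 ∧ (x : ℕ) + 1 ≤ n := by omega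
    have hm := ent_mem θ hx1
    have hstep := hv (x + 1) (mem_Icc.2 hx1)
    obtain ⟨j, hj, hinv⟩ := exists_invPair (n + 1) (key (ent σ) n) (isDec D) (ent θ)
      (ent θ (x + 1)) (by rw [ent_zero]; exact (hE.key_lt (by omega) hm.2).le) x
      (fun j hj => hv j (by rw [mem_Icc] at *; omega)) (hstep.2 hxD)
    rw [mem_Icc] at hj
    refine mem_image.2 ⟨(j, x + 1), ?_, rfl⟩
    rw [dinvPairs, mem_filter, mem_product, mem_Icc, mem_Icc]
    have hj' : 1 ≤ j ∧ j ≤ n := by omega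
    exact ⟨⟨hj', hx1⟩, by change j < x + 1; omega,
      (primary_or_secondary_iff σ D θ hj' hx1).2 hinv⟩
  have h1 := card_le_card hsub
  rw [card_image_of_injective _ (fun a b h => by
    have h' : (a : ℕ) + 1 = b + 1 := h
    omega), card_dec_toPath] at h1
  exact h1.trans card_image_le

lemma dwPos_toPath {i : ℕ} (hi : 1 ≤ i ∧ i ≤ n) : dwPos (toPath σ D θ) i = ent θ i := by
  have hE := isWord_ent σ
  have h1 : #{i' ∈ Icc 1 n | ent θ i' ≤ ent θ i} = ent θ i := by
    have h2 := sum_ent θ (fun j => if j ≤ ent θ i then 1 else 0)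
    rw [← card_filter, ← card_filter] at h2
    rw [h2]
    have h3 : {j ∈ Icc 1 n | j ≤ ent θ i} = Icc 1 (ent θ i) := by
      ext j
      have := ent_mem θ hi
      rw [mem_filter, mem_Icc, mem_Icc]
      omega
    rw [h3, Nat.card_Icc, Nat.add_sub_cancel]
  rw [← h1, dwPos]
  congr 1
  refine filter_congr fun j hj => ?_
  rw [mem_Icc] at hj
  have e1 := aw_toPath σ D θ hi
  have e2 := aw_toPath σ D θ hj
  have h2 := hE.key_lt_iff_lt (ent_mem θ hi).2 (ent_mem θ hj).2
  rw [key_lt_iff (hE.le _) (hE.le _)] at h2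
  rw [lbl_toPath, lbl_toPath]
  omega

lemma dwEq_toPath : DwEq (toPath σ D θ) σ D := by
  constructor
  · intro j hj
    rw [mem_Icc] at hj
    obtain ⟨i, hi, rfl⟩ := ent_surj θ hj
    rw [dwEnt, ← lbl_toPath σ D θ]
    have : (Icc 1 n).filter (fun i' => dwPos (toPath σ D θ) i' = ent θ i) = {i} := by
      ext i'
      rw [mem_filter, mem_Icc, mem_singleton]
      constructor
      · rintro ⟨a, b⟩
        rw [dwPos_toPath σ D θ a] at b
        exact (isWord_ent θ).inj _ _ a.2 hi.2 b
      · rintro rfl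
        exact ⟨hi, dwPos_toPath σ D θ hi⟩
    rw [this, sum_singleton]
  · intro j hj
    rw [mem_Icc] at hj
    obtain ⟨i, hi, rfl⟩ := ent_surj θ hj
    rw [← pdec_toPath σ D θ, dwDec, Bool.eq_iff_iff, decide_eq_true_iff]
    constructor
    · rintro ⟨i', h'⟩
      rw [mem_filter, mem_Icc] at h'
      obtain ⟨a, b, c⟩ := h'
      rw [dwPos_toPath σ D θ a] at b
      obtain rfl := (isWord_ent θ).inj _ _ a.2 hi.2 b
      exact c
    · intro h
      exact ⟨i, mem_filter.2 ⟨mem_Icc.2 hi, dwPos_toPath σ D θ hi, h⟩⟩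

end Paths

end QEuler

/-! ### From labelled paths to reading orders -/

namespace QEuler

section Converse

variable {n : ℕ} (P : PathData n)

lemma dwPos_mem {i : ℕ} (hi : 1 ≤ i ∧ i ≤ n) : 1 ≤ dwPos P i ∧ dwPos P i ≤ n := by
  constructor
  · refine card_pos.2 ⟨i, mem_filter.2 ⟨mem_Icc.2 hi, Or.inr ⟨rfl, le_rfl⟩⟩⟩
  · refine (card_filter_le _ _).trans ?_
    simp

/-- The order of the letters in the diagonal word. -/
lemma dwPos_le_iff {i j : ℕ} (hi : 1 ≤ i ∧ i ≤ n) (_hj : 1 ≤ j ∧ j ≤ n) :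
    dwPos P i ≤ dwPos P j ↔ aw P i < aw P j ∨ (aw P i = aw P j ∧ lbl P j ≤ lbl P i) := by
  constructor
  · intro h
    by_contra h'
    refine absurd h (not_le.2 (card_lt_card ?_))
    rw [ssubset_iff_of_subset]
    · refine ⟨i, mem_filter.2 ⟨mem_Icc.2 hi, Or.inr ⟨rfl, le_rfl⟩⟩, fun hm => h' ?_⟩
      exact (mem_filter.1 hm).2
    · intro x hx
      rw [mem_filter] at hx ⊢
      exact ⟨hx.1, by omega⟩
  · intro h
    refine card_le_card fun x hx => ?_
    rw [mem_filter] at hx ⊢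
    exact ⟨hx.1, by omega⟩

lemma dwPos_inj {i j : ℕ} (hi : 1 ≤ i ∧ i ≤ n) (hj : 1 ≤ j ∧ j ≤ n)
    (h : dwPos P i = dwPos P j) : i = j := by
  have h1 := (dwPos_le_iff P hi hj).1 h.le
  have h2 := (dwPos_le_iff P hj hi).1 h.ge
  exact (isWord_ent P.2.1).inj i j hi.2 hj.2 (show lbl P i = lbl P j by omega)

/-- The positions in the diagonal word of the letters read along the path. -/
noncomputable def dwPerm : Equiv.Perm (Fin n) :=
  Equiv.ofBijective
    (fun x : Fin n => (⟨dwPos P (x + 1) - 1, by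
      have := dwPos_mem P (i := x + 1) (by omega); omega⟩ : Fin n))
    (Finite.injective_iff_bijective.1 fun x y h => by
      have h' : dwPos P (x + 1) - 1 = dwPos P (y + 1) - 1 := congrArg Fin.val h
      have h1 := dwPos_mem P (i := x + 1) (by omega)
      have h2 := dwPos_mem P (i := y + 1) (by omega)
      have := dwPos_inj P (i := x + 1) (j := y + 1) (by omega) (by omega) (by omega)
      omega)

lemma ent_dwPerm {i : ℕ} (hi : 1 ≤ i ∧ i ≤ n) : ent (dwPerm P) i = dwPos P i := by
  have h := dwPos_mem P hi
  rw [ent_of_mem _ hi]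
  change dwPos P (i - 1 + 1) - 1 + 1 = dwPos P i
  rw [Nat.sub_add_cancel hi.1]
  omega

variable {P} {σ : Equiv.Perm (Fin n)} {D : Finset (Fin n)}

lemma filter_dwPos {i : ℕ} (hi : 1 ≤ i ∧ i ≤ n) :
    (Icc 1 n).filter (fun i' => dwPos P i' = dwPos P i) = {i} := by
  ext i'
  rw [mem_filter, mem_Icc, mem_singleton]
  constructor
  · rintro ⟨a, b⟩
    exact dwPos_inj P a hi b
  · rintro rfl
    exact ⟨hi, rfl⟩

lemma DwEq.ent_dwPos (h : DwEq P σ D) {i : ℕ} (hi : 1 ≤ i ∧ i ≤ n) :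
    ent σ (dwPos P i) = lbl P i := by
  rw [← h.1 _ (mem_Icc.2 (dwPos_mem P hi)), dwEnt, filter_dwPos hi, sum_singleton]

lemma DwEq.isDec_dwPos (h : DwEq P σ D) {i : ℕ} (hi : 1 ≤ i ∧ i ≤ n) :
    isDec D (dwPos P i) = pdec P i := by
  rw [← h.2 _ (mem_Icc.2 (dwPos_mem P hi)), dwDec, Bool.eq_iff_iff, decide_eq_true_iff]
  constructor
  · rintro ⟨i', h'⟩
    rw [mem_filter, mem_Icc] at h'
    obtain rfl := dwPos_inj P h'.1 hi h'.2.1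
    exact h'.2.2
  · intro hd
    exact ⟨i, mem_filter.2 ⟨mem_Icc.2 hi, rfl, hd⟩⟩

/-- The diagonals of a valid path are the decreasing runs of its diagonal word.  Indeed the path
enters each diagonal `d > 0` for the first time by a step from a smaller label on the diagonal
`d - 1`, so the diagonal word ascends where it passes from one diagonal to the next. -/
lemma DwEq.aw_eq (h : DwEq P σ D) (hv : IsValidPath P) (j : ℕ) (h1 : 1 ≤ j) :
    j ≤ n → ∀ i, 1 ≤ i ∧ i ≤ n → dwPos P i = j → aw P i + 1 = runIdx (ent σ) j := by
  obtain ⟨v1, v2, v3, -⟩ := hv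
  induction j, h1 using Nat.le_induction with
  | base =>
    intro hn i hi hij
    have hle := (dwPos_le_iff P hi (j := 1) (by omega)).1
      (by rw [hij]; exact (dwPos_mem P (by omega)).1)
    have := v1 hn
    rw [(isWord_ent σ).runIdx_one hn]
    omega
  | succ j hj1 ih =>
    intro hj i hi hij
    obtain ⟨i₀, hi₀, hij₀⟩ := ent_surj (dwPerm P) (j := j) (by omega)
    rw [ent_dwPerm P hi₀] at hij₀
    have ih := ih (by omega) i₀ hi₀ hij₀
    have hE0 := h.ent_dwPos hi₀
    have hE1 := h.ent_dwPos hi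
    rw [hij₀] at hE0
    rw [hij] at hE1
    rw [runIdx, ← ih, hE0, hE1]
    have hlt : ¬ dwPos P i ≤ dwPos P i₀ := by omega
    rw [dwPos_le_iff P hi hi₀] at hlt
    by_cases heq : aw P i₀ = aw P i
    · rw [if_neg (by omega)]; omega
    · have hex : ∃ m, 1 ≤ m ∧ m ≤ n ∧ aw P i ≤ aw P m := ⟨i, hi.1, hi.2, le_rfl⟩
      classical
      obtain ⟨hm1, hmn, hma⟩ := Nat.find_spec hex
      have hmin := fun k => Nat.find_min hex (m := k)
      generalize Nat.find hex = m at hm1 hmn hma hmin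
      have hm2 : 2 ≤ m := by
        by_contra hc
        obtain rfl : m = 1 := by omega
        have := v1 hmn
        omega
      have hpred := hmin (m - 1) (by omega)
      have v2 := v2 m (mem_Icc.2 ⟨hm2, hmn⟩)
      have v3 := v3 m (mem_Icc.2 ⟨hm2, hmn⟩)
      have d1 := dwPos_le_iff P (i := i) (j := m - 1) hi (by omega)
      have d2 := dwPos_le_iff P (i := m - 1) (j := i₀) (by omega) hi₀
      have d3 := dwPos_le_iff P (i := m) (j := i₀) ⟨hm1, hmn⟩ hi₀
      have d4 := dwPos_le_iff P (i := i) (j := m) hi ⟨hm1, hmn⟩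
      rw [if_pos (by omega)]
      omega

lemma DwEq.toPath_dwPerm (h : DwEq P σ D) (hv : IsValidPath P) :
    toPath σ D (dwPerm P) = P := by
  have e1 : (toPath σ D (dwPerm P)).1 = P.1 := by
    funext x
    have hx : 1 ≤ (x : ℕ) + 1 ∧ (x : ℕ) + 1 ≤ n := by omega
    have a1 := h.aw_eq hv _ (dwPos_mem P hx).1 (dwPos_mem P hx).2 _ hx rfl
    rw [← ent_dwPerm P hx, ← aw_toPath σ D (dwPerm P) hx, aw, aw, dif_pos hx, dif_pos hx] at a1
    exact Fin.ext (Nat.add_right_cancel a1).symm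
  have e2 : (toPath σ D (dwPerm P)).2.1 = P.2.1 := by
    ext x
    have hx : 1 ≤ (x : ℕ) + 1 ∧ (x : ℕ) + 1 ≤ n := by omega
    have a1 := h.ent_dwPos hx
    rw [← ent_dwPerm P hx, ← lbl_toPath σ D (dwPerm P), lbl, lbl, ent_succ, ent_succ] at a1
    exact Nat.add_right_cancel a1
  have e3 : (toPath σ D (dwPerm P)).2.2 = P.2.2 := by
    ext x
    have hx : 1 ≤ (x : ℕ) + 1 ∧ (x : ℕ) + 1 ≤ n := by omega
    have a1 := h.isDec_dwPos hx
    rw [← ent_dwPerm P hx, ← pdec_toPath σ D (dwPerm P), pdec, pdec, isDec_succ, isDec_succ] at a1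
    exact decide_eq_decide.1 a1
  exact Prod.ext e1 (Prod.ext e2 e3)

variable (σ D)

lemma toPath_injective : Function.Injective (toPath σ D) := fun θ θ' h => by
  have h1 : θ.trans σ = θ'.trans σ := congrArg (fun P => P.2.1) h
  ext x
  have h2 := congrArg (fun e : Equiv.Perm (Fin n) => e x) h1
  simp only [Equiv.trans_apply, σ.apply_eq_iff_eq] at h2
  rw [h2]

lemma filter_stLD {k : ℕ} (hk : #D = k) : (stLD n k).filter (fun P => DwEq P σ D) =
    ({θ | IsValidPath (toPath σ D θ)} : Finset (Equiv.Perm (Fin n))).map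
      ⟨toPath σ D, toPath_injective σ D⟩ := by
  ext P
  simp only [stLD, mem_filter, mem_univ, true_and, mem_map, Function.Embedding.coeFn_mk]
  constructor
  · rintro ⟨⟨hv, -⟩, h⟩
    exact ⟨dwPerm P, by rwa [h.toPath_dwPerm hv], h.toPath_dwPerm hv⟩
  · rintro ⟨θ, hv, rfl⟩
    exact ⟨⟨hv, by rw [card_dec_toPath, hk]⟩, dwEq_toPath σ D θ⟩

end Converse

/-! ### The schedule formula -/

section Assembly

variable {n : ℕ}

lemma sum_perm_eq_sum_lists {R : Type*} [CommRing R] (g : List ℕ → R) :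
    ∑ θ : Equiv.Perm (Fin n), g ((List.range' 1 n).map (ent θ)) =
      ((List.permutations' (List.range' 1 n)).map g).sum := by
  have hnd := (List.permutations_perm_permutations' _).nodup_iff.1
    (List.nodup_permutations (List.range' 1 n) List.nodup_range')
  rw [← List.sum_toFinset g hnd]
  refine sum_bij (fun θ _ => (List.range' 1 n).map (ent θ)) ?_ ?_ ?_ ?_
  · intro θ _
    have hE := isWord_ent θ
    rw [List.mem_toFinset, List.mem_permutations', List.perm_ext_iff_of_nodup _ List.nodup_range']
    · intro y
      simp only [List.mem_map, List.mem_range'_1]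
      constructor
      · rintro ⟨i, hi, rfl⟩
        have := ent_mem θ (i := i) (by omega)
        omega
      · intro hy
        obtain ⟨i, hi, h⟩ := ent_surj θ (j := y) (by omega)
        exact ⟨i, by omega, h⟩
    · refine List.Nodup.map_on ?_ List.nodup_range'
      intro x hx y hy h
      rw [List.mem_range'_1] at hx hy
      exact hE.inj x y (by omega) (by omega) h
  · intro θ _ θ' _ h
    ext x
    have h1 := List.map_inj_left.1 h (x + 1) (List.mem_range'_1.2 (by omega))
    rw [ent_succ, ent_succ] at h1
    omega
  · intro l hl
    rw [List.mem_toFinset, List.mem_permutations'] at hl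
    have hlen : l.length = n := by rw [hl.length_eq, List.length_range']
    have hnd : l.Nodup := hl.nodup_iff.2 List.nodup_range'
    have hmem : ∀ (i : ℕ) (hi : i < l.length), 1 ≤ l[i] ∧ l[i] ≤ n := by
      intro i hi
      have := hl.mem_iff.1 (List.getElem_mem hi)
      rw [List.mem_range'_1] at this
      omega
    let θ : Equiv.Perm (Fin n) := Equiv.ofBijective
      (fun x : Fin n => (⟨l[(x : ℕ)]'(by omega) - 1, by
        have := hmem x (by omega); omega⟩ : Fin n))
      (Finite.injective_iff_bijective.1 fun x y h => by
        have h' := congrArg Fin.val h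
        have h1 := hmem x (by omega)
        have h2 := hmem y (by omega)
        have h3 : l[(x : ℕ)]'(by omega) = l[(y : ℕ)]'(by omega) := by
          simp only at h'
          omega
        exact Fin.ext ((List.Nodup.getElem_inj_iff hnd).1 h3))
    refine ⟨θ, mem_univ _, ?_⟩
    refine List.ext_getElem (by simp [hlen]) fun i h1 h2 => ?_
    rw [List.getElem_map, List.getElem_range', ent_of_mem θ (by omega)]
    have h3 := hmem i h2
    change l[1 + 1 * i - 1]'_ - 1 + 1 = l[i]
    have h4 : 1 + 1 * i - 1 = i := by omega
    simp only [h4]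
    omega
  · intro θ _; rfl

lemma card_filter_isDec (D : Finset (Fin n)) : #{i ∈ Icc 1 n | isDec D i = true} = #D := by
  rw [← card_image_of_injective D (f := fun x : Fin n => (x : ℕ) + 1) (fun a b h => by
    have h' : (a : ℕ) + 1 = b + 1 := h
    omega)]
  congr 1
  ext i
  rw [mem_filter, mem_image, mem_Icc]
  constructor
  · rintro ⟨hi, h⟩
    rw [isDec, dif_pos hi, decide_eq_true_iff] at h
    exact ⟨_, h, by change i - 1 + 1 = i; omega⟩
  · rintro ⟨x, hx, rfl⟩
    exact ⟨by omega, by rw [isDec_succ]; exact decide_eq_true hx⟩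

/-- The schedule formula without the subtraction of the number of decorations. -/
lemma sum_card_dinvPairs {R : Type*} [CommRing R] (q : R) (σ : Equiv.Perm (Fin n))
    (D : Finset (Fin n)) :
    ∑ θ : Equiv.Perm (Fin n) with IsValidPath (toPath σ D θ), q ^ #(dinvPairs (toPath σ D θ)) =
      q ^ #D * ∏ i ∈ Icc 1 n, ∑ e ∈ range (schedNum n (ent σ) (isDec D) i), q ^ e := by
  have hE := isWord_ent σ
  have h1 := sum_arrangements q (n + 1) (isDec D) (κ := key (ent σ) n) (by omega) n
    (fun i j hij hj => hE.key_lt hij hj)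
  rw [card_filter_isDec, ← sum_perm_eq_sum_lists] at h1
  rw [sum_filter]
  have h2 : ∏ i ∈ Icc 1 n, ∑ e ∈ range (schedNum n (ent σ) (isDec D) i), q ^ e =
      ∏ i ∈ Icc 1 n, qInt q (if isDec D i = true then decSlots (n + 1) (key (ent σ) n) (isDec D) n i
        else undecSlots (n + 1) (key (ent σ) n) (isDec D) i) :=
    prod_congr rfl fun i hi => by rw [hE.schedNum_eq (isDec_zero D) hi, qInt]
  rw [h2, ← h1]
  refine sum_congr rfl fun θ _ => ?_
  have h3 := wt_range' q (n + 1) (isDec D) (κ := key (ent σ) n) (ent θ) n 0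
  rw [ent_zero] at h3
  simp only [zero_add] at h3
  rw [h3]
  simp only [isValidPath_toPath, card_dinvPairs_toPath]

end Assembly

end QEuler

open QEuler MvPolynomial

/-- schedule formula, Theorem 3.13 of Haglund–Sergel.
For a decorated permutation `τ = (σ, D)` of `{1,…,n}` with `k` decorations and schedule
numbers `(s_1,…,s_n)`, in `ℤ[q,t]` (with `q = X 0`, `t = X 1`):
`∑_{P ∈ stLD(n)^{•k}, dw(P) = τ} q^{dinv P} t^{area P} = t^{revmaj τ} ∏_{i=1}^n [s_i]_q`. -/
theorem schedule_formula {n k : ℕ} (σ : Equiv.Perm (Fin n)) (D : Finset (Fin n))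
    (hk : D.card = k) :
    ∑ P ∈ (stLD n k).filter (fun P => DwEq P σ D),
        (X 0 : MvPolynomial (Fin 2) ℤ) ^ dinv P * (X 1 : MvPolynomial (Fin 2) ℤ) ^ area P
      = (X 1 : MvPolynomial (Fin 2) ℤ) ^ revmaj n (ent σ)
          * ∏ i ∈ Finset.Icc 1 n,
              ∑ e ∈ Finset.range (schedNum n (ent σ) (isDec D) i),
                (X 0 : MvPolynomial (Fin 2) ℤ) ^ e := by
  rw [filter_stLD σ D hk, sum_map]
  have hq : (X 0 : MvPolynomial (Fin 2) ℤ) ^ #D ≠ 0 := pow_ne_zero _ (X_ne_zero _)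
  refine mul_left_cancel₀ hq ?_
  rw [mul_left_comm, ← sum_card_dinvPairs, mul_sum, mul_sum]
  refine sum_congr rfl fun θ hθ => ?_
  have hle := card_le_dinvPairs σ D θ (mem_filter.1 hθ).2
  -- Subtracting the number of decorations does not truncate.
  rw [Function.Embedding.coeFn_mk, area_toPath, dinv, card_dec_toPath, ← mul_assoc, ← pow_add,
    Nat.add_sub_cancel' hle, mul_comm]
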